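/- Let k be a field and A an associative unital k-algebra. Write k[ε] = k[X]/(X²). A first-order deformation of A is an associative unital k[ε]-algebra B that is flat as a k[ε]-module, together with a k-algebra isomorphism k ⊗_{k[ε]} B ≅ A; two first-order deformations are equivalent if there is a k[ε]-algebra isomorphism between them compatible with the given identifications with A. Then the set of equivalence classes of first-order deformations of A is in canonical bijection with the second Hochschild cohomology group HH²(A) := Ext²_{A ⊗_k Aᵒᵖ}(A, A), where A is regarded as a left (A ⊗_k Aᵒᵖ)-module via left and right multiplication and Ext is computed in the abelian category of left (A ⊗_k Aᵒᵖ)-modules. -/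

import Mathlib

open TensorProduct CategoryTheory

namespace AlgebraDeformation

variable (k : Type) [Field k]

/-- `k` is an algebra over the dual numbers `k[ε] = k[X]/(X²)` via evaluation at `ε = 0`. -/
noncomputable instance : Algebra (DualNumber k) k :=
  (TrivSqZeroExt.fstHom k k k : DualNumber k →ₐ[k] k).toRingHom.toAlgebra

instance : SMulCommClass (DualNumber k) k k :=
  ⟨fun d a x => by
    simp only [Algebra.smul_def, smul_eq_mul]
    ring⟩

variable (A : Type) [Ring A] [Algebra k A]

/-- A first-order deformation of an associative unital `k`-algebra `A`: an associative
unital `k[ε]`-algebra `B` that is flat as a `k[ε]`-module, together with a `k`-algebra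
isomorphism `k ⊗_{k[ε]} B ≅ A`. -/
structure FirstOrderDeformation : Type 1 where
  /-- the underlying `k[ε]`-algebra of the deformation -/
  B : Type
  [ringB : Ring B]
  [algB : Algebra (DualNumber k) B]
  /-- the deformation is flat as a module over the dual numbers `k[ε]` -/
  flat : Module.Flat (DualNumber k) B
  /-- the identification of the special fiber `k ⊗_{k[ε]} B` with `A`,
  as `k`-algebras -/
  iso : (k ⊗[DualNumber k] B) ≃ₐ[k] A

attribute [instance] FirstOrderDeformation.ringB FirstOrderDeformation.algB

/-- Two first-order deformations of `A` are equivalent if there is a `k[ε]`-algebra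
isomorphism between them compatible with the given identifications of the special
fibers with `A`. -/
def Equivalent (d d' : FirstOrderDeformation k A) : Prop :=
  ∃ ψ : d.B ≃ₐ[DualNumber k] d'.B,
    ∀ (x : k) (b : d.B), d'.iso (x ⊗ₜ[DualNumber k] ψ b) = d.iso (x ⊗ₜ[DualNumber k] b)

/-- `A` is a left module over its enveloping algebra `A ⊗[k] Aᵐᵒᵖ`, via left and right
multiplication. -/
noncomputable instance : Module (A ⊗[k] Aᵐᵒᵖ) A := TensorProduct.Algebra.module

section H
open Limits
universe v u
variable {C : Type u} [Category.{v} C] [Abelian C] [EnoughProjectives C]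

lemma proj_d_comp {X Y : C} (f : X ⟶ Y) : Projective.d f ≫ f = 0 :=
  (Category.assoc (Projective.π (kernel f)) (kernel.ι f) f).trans
    (by rw [kernel.condition]; exact comp_zero)

/-- The inductive step extending a partial projective resolution. -/
noncomputable def extSucc (S : ShortComplex C) : Σ' (X₃ : C) (d₂ : X₃ ⟶ S.X₁), d₂ ≫ S.f = 0 :=
  ⟨Projective.syzygies S.f, Projective.d S.f, proj_d_comp S.f⟩

/-- extend a partial resolution -/
noncomputable def extComplex {P0 P1 P2 : C} (d1 : P1 ⟶ P0) (d2 : P2 ⟶ P1) (w : d2 ≫ d1 = 0) :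
    ChainComplex C ℕ :=
  ChainComplex.mk P0 P1 P2 d1 d2 w extSucc

lemma extComplex_d10 {P0 P1 P2 : C} (d1 : P1 ⟶ P0) (d2 : P2 ⟶ P1) (w : d2 ≫ d1 = 0) :
    (extComplex d1 d2 w).d 1 0 = d1 := by simp [extComplex]

lemma extComplex_d21 {P0 P1 P2 : C} (d1 : P1 ⟶ P0) (d2 : P2 ⟶ P1) (w : d2 ≫ d1 = 0) :
    (extComplex d1 d2 w).d 2 1 = d2 := by simp [extComplex]

lemma exact_of_eq {C : Type u} [Category.{v} C] [Abelian C] {X1 X2 X3 : C} {f f' : X1 ⟶ X2} {g g' : X2 ⟶ X3} (hf : f = f') (hg : g = g')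
    (w : f ≫ g = 0) (w' : f' ≫ g' = 0) (h : (ShortComplex.mk f g w).Exact) :
    (ShortComplex.mk f' g' w').Exact := by
  subst hf hg; exact h

lemma epi_of_eq {C : Type u} [Category.{v} C] {X Y : C} {f g : X ⟶ Y} (h : f = g) (hf : Epi f) : Epi g := h ▸ hf

lemma exact_of_iso_comp {C : Type u} [Category.{v} C] [Abelian C] {X0 X1 X2 X3 : C} (i : X0 ≅ X1) {f : X1 ⟶ X2} {f' : X0 ⟶ X2} {g : X2 ⟶ X3}
    (hf : f' = i.hom ≫ f)
    (w : f ≫ g = 0) (w' : f' ≫ g = 0) (h : (ShortComplex.mk f g w).Exact) :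
    (ShortComplex.mk f' g w').Exact := by
  refine (ShortComplex.exact_iff_of_iso ?_).2 h
  exact ShortComplex.isoMk i (Iso.refl _) (Iso.refl _) (by simp [hf]) (by simp)

lemma extComplex_exact {P0 P1 P2 : C} (d1 : P1 ⟶ P0) (d2 : P2 ⟶ P1) (w : d2 ≫ d1 = 0)
    (n : ℕ) : (ShortComplex.mk _ _ ((extComplex d1 d2 w).d_comp_d (n + 3) (n + 2) (n + 1))).Exact :=
  exact_of_iso_comp (ChainComplex.mkXIso P0 P1 P2 d1 d2 w extSucc n)
    (ChainComplex.mk_d P0 P1 P2 d1 d2 w extSucc n) _ _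
    (exact_d_f ((extComplex d1 d2 w).d (n + 2) (n + 1)))

lemma extComplex_projective {P0 P1 P2 : C} [Projective P0] [Projective P1] [Projective P2]
    (d1 : P1 ⟶ P0) (d2 : P2 ⟶ P1) (w : d2 ≫ d1 = 0) (n : ℕ) :
    Projective ((extComplex d1 d2 w).X n) := by
  obtain (_ | _ | _ | n) := n
  · assumption
  · assumption
  · assumption
  · exact Projective.projective_over _

/-- A projective resolution extending a partial one. -/
noncomputable def extRes {Z P0 P1 P2 : C} [Projective P0] [Projective P1] [Projective P2]
    (e : P0 ⟶ Z) (d1 : P1 ⟶ P0) (d2 : P2 ⟶ P1) (w0 : d1 ≫ e = 0) (w : d2 ≫ d1 = 0)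
    (he : Epi e) (h0 : (ShortComplex.mk _ _ w0).Exact) (h1 : (ShortComplex.mk _ _ w).Exact) :
    ProjectiveResolution Z where
  complex := extComplex d1 d2 w
  projective := extComplex_projective d1 d2 w
  π := (ChainComplex.toSingle₀Equiv (extComplex d1 d2 w) Z).symm ⟨e, by
          rw [extComplex_d10]; exact w0⟩
  quasiIso := ⟨fun n => by
    cases n with
    | zero =>
      rw [ChainComplex.quasiIsoAt₀_iff, ShortComplex.quasiIso_iff_of_zeros']
      · have w0' : (extComplex d1 d2 w).d 1 0 ≫ e = 0 := by rw [extComplex_d10]; exact w0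
        have hpi : ((ChainComplex.toSingle₀Equiv (extComplex d1 d2 w) Z).symm ⟨e, w0'⟩).f 0 = e :=
            @ChainComplex.toSingle₀Equiv_symm_apply_f_zero _ _ _ _ (extComplex d1 d2 w) Z e w0'
        refine ⟨exact_of_eq (extComplex_d10 d1 d2 w).symm hpi.symm w0 _ h0, ?_⟩
        exact epi_of_eq hpi.symm he
      all_goals rfl
    | succ n =>
      rw [quasiIsoAt_iff_exactAt']
      · rw [HomologicalComplex.exactAt_iff' _ (n + 1 + 1) (n + 1) n (by simp) (by simp)]
        cases n with
        | zero =>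
          exact exact_of_eq (extComplex_d21 d1 d2 w).symm (extComplex_d10 d1 d2 w).symm w _ h1
        | succ n => exact extComplex_exact d1 d2 w n
      · apply ChainComplex.exactAt_succ_single_obj⟩

end H

lemma homology_surj {R : Type} [Ring R] (S : ShortComplex (ModuleCat.{0} R)) :
    ∃ π : {x : S.X₂ // S.g x = 0} → S.homology, Function.Surjective π ∧
      ∀ x y, π x = π y ↔ ∃ w : S.X₁, S.f w = x.1 - y.1 := by
  let i := S.moduleCatHomologyIso.toLinearEquiv
  refine ⟨fun x => i.symm (Submodule.Quotient.mk ⟨x.1, x.2⟩), ?_, ?_⟩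
  · intro h
    obtain ⟨x, hx⟩ := Submodule.Quotient.mk_surjective _ (i h)
    exact ⟨⟨x.1, x.2⟩, (i.symm_apply_eq).2 hx⟩
  · intro x y
    refine (i.symm.injective.eq_iff.trans (Submodule.Quotient.eq _)).trans ?_
    constructor
    · rintro ⟨w, hw⟩
      exact ⟨w, congrArg Subtype.val hw⟩
    · rintro ⟨w, hw⟩
      exact ⟨w, Subtype.ext hw⟩

section M
variable {R : Type} [Ring R] {Z P0 P1 P2 : Type} [AddCommGroup Z] [AddCommGroup P0]
  [AddCommGroup P1] [AddCommGroup P2] [Module R Z] [Module R P0] [Module R P1] [Module R P2]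
  [Module.Projective R P0] [Module.Projective R P1] [Module.Projective R P2]

/-- generic description of `Ext²` -/
theorem ext2_surj (e : P0 →ₗ[R] Z) (d1 : P1 →ₗ[R] P0) (d2 : P2 →ₗ[R] P1)
    (he : Function.Surjective e) (h0 : Function.Exact d1 e) (h1 : Function.Exact d2 d1)
    (M : Type) [AddCommGroup M] [Module R M] :
    ∃ F : {f : P2 →ₗ[R] M // ∀ z, d2 z = 0 → f z = 0} →
      ((Ext ℤ (ModuleCat.{0} R) 2).obj (Opposite.op (ModuleCat.of R Z))).obj (ModuleCat.of R M),
      Function.Surjective F ∧ ∀ f f', F f = F f' ↔ ∃ g : P1 →ₗ[R] M, f.1 - f'.1 = g ∘ₗ d2 := by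
  have w0 : ModuleCat.ofHom d1 ≫ ModuleCat.ofHom e = 0 := by
    ext x; exact h0.apply_apply_eq_zero x
  have w : ModuleCat.ofHom d2 ≫ ModuleCat.ofHom d1 = 0 := by
    ext x; exact h1.apply_apply_eq_zero x
  have p0 : Projective (ModuleCat.of R P0) := inferInstance
  have p1 : Projective (ModuleCat.of R P1) := inferInstance
  have p2 : Projective (ModuleCat.of R P2) := inferInstance
  let P := extRes (ModuleCat.ofHom e) (ModuleCat.ofHom d1) (ModuleCat.ofHom d2) w0 w
    ((ModuleCat.epi_iff_surjective _).2 he)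
    ((ShortComplex.moduleCat_exact_iff _).2 fun x hx => (h0 x).1 hx)
    ((ShortComplex.moduleCat_exact_iff _).2 fun x hx => (h1 x).1 hx)
  let K := P.complex.linearYonedaObj ℤ (ModuleCat.of R M)
  let S := K.sc' 1 2 3
  have i1 : ((Ext ℤ (ModuleCat.{0} R) 2).obj (Opposite.op (ModuleCat.of R Z))).obj
      (ModuleCat.of R M) ≅ S.homology :=
    P.isoExt 2 _ ≪≫ ShortComplex.homologyMapIso (K.isoSc' 1 2 3 (by simp) (by simp))
  obtain ⟨p, hp, hp'⟩ := homology_surj S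
  have hd2 : P.complex.d 2 1 = ModuleCat.ofHom d2 := extComplex_d21 _ _ w
  have hex : Function.Exact (P.complex.d 3 2) d2 := by
    have := (ShortComplex.moduleCat_exact_iff_range_eq_ker _).1
      (extComplex_exact (ModuleCat.ofHom d1) (ModuleCat.ofHom d2) w 0)
    intro x
    exact (SetLike.ext_iff.1 this x).symm
  have key : ∀ f : P2 →ₗ[R] M, S.g (ModuleCat.ofHom f) = 0 ↔ ∀ z, d2 z = 0 → f z = 0 := by
    intro f
    have : S.g (ModuleCat.ofHom f) = P.complex.d 3 2 ≫ ModuleCat.ofHom f := rfl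
    rw [this]
    constructor
    · intro h z hz
      obtain ⟨y, rfl⟩ := (hex z).1 hz
      exact congrArg (fun q => ModuleCat.Hom.hom q y) h
    · intro h
      refine ModuleCat.hom_ext (LinearMap.ext fun y => ?_)
      exact h _ (hex.apply_apply_eq_zero y)
  refine ⟨fun f => i1.inv (p ⟨ModuleCat.ofHom f.1, (key f.1).2 f.2⟩), ?_, ?_⟩
  · intro x
    obtain ⟨⟨y, hy⟩, hxy⟩ := hp (i1.hom x)
    refine ⟨⟨ModuleCat.Hom.hom y, (key (ModuleCat.Hom.hom y)).1 hy⟩, ?_⟩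
    have : i1.inv (i1.hom x) = x := by simp
    rw [← hxy] at this
    exact this
  · intro f f'
    have hinj : Function.Injective i1.inv := i1.symm.toLinearEquiv.injective
    rw [hinj.eq_iff, hp']
    have hf : ∀ g : P1 →ₗ[R] M, S.f (ModuleCat.ofHom g) = ModuleCat.ofHom (g ∘ₗ d2) := by
      intro g
      have : S.f (ModuleCat.ofHom g) = P.complex.d 2 1 ≫ ModuleCat.ofHom g := rfl
      rw [this, hd2]
      rfl
    constructor
    · rintro ⟨g, hg⟩
      refine ⟨ModuleCat.Hom.hom g, ?_⟩
      have h2 := (hf (ModuleCat.Hom.hom g)).symm.trans hg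
      exact (congrArg ModuleCat.Hom.hom h2).symm
    · rintro ⟨g, hg⟩
      refine ⟨ModuleCat.ofHom g, (hf g).trans ?_⟩
      rw [← hg]
      rfl
end M
section Bar

instance : IsScalarTower k (A ⊗[k] Aᵐᵒᵖ) A := ⟨fun c x a => by
  induction x with
  | zero =>
    have h : (0 : A ⊗[k] Aᵐᵒᵖ) • a = 0 := zero_smul (A ⊗[k] Aᵐᵒᵖ) a
    rw [smul_zero, h, smul_zero]
  | add x y hx hy => simp only [smul_add, add_smul, hx, hy]
  | tmul u v =>
    rw [TensorProduct.smul_tmul', TensorProduct.Algebra.smul_def, TensorProduct.Algebra.smul_def,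
      smul_assoc]⟩

lemma env_smul (a b x : A) :
    (a ⊗ₜ[k] MulOpposite.op b : A ⊗[k] Aᵐᵒᵖ) • x = a * (x * b) := by
  rw [TensorProduct.Algebra.smul_def]; rfl

variable {k A}

/-- The linear map out of the free module `E ⊗ V` extending a `k`-linear map on `V`. -/
noncomputable def freeLift {E V M : Type} [Semiring E] [Algebra k E] [AddCommMonoid V] [Module k V]
    [AddCommMonoid M] [Module k M] [Module E M] [IsScalarTower k E M] (φ : V →ₗ[k] M) :
    E ⊗[k] V →ₗ[E] M :=
  TensorProduct.AlgebraTensorModule.lift (LinearMap.toSpanSingleton E (V →ₗ[k] M) φ)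

@[simp] lemma freeLift_tmul {E V M : Type} [Semiring E] [Algebra k E] [AddCommMonoid V] [Module k V]
    [AddCommMonoid M] [Module k M] [Module E M] [IsScalarTower k E M] (φ : V →ₗ[k] M) (x : E)
    (v : V) : freeLift φ (x ⊗ₜ[k] v) = x • φ v := by
  simp [freeLift]

lemma smul_tri {E V : Type} [Ring E] [Algebra k E] [AddCommGroup V] [Module k V]
    (x a b c : E) (u v w : V) : x • (a ⊗ₜ[k] u - b ⊗ₜ[k] v + c ⊗ₜ[k] w) =
      (x * a) ⊗ₜ[k] u - (x * b) ⊗ₜ[k] v + (x * c) ⊗ₜ[k] w := by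
  simp only [smul_add, smul_sub, TensorProduct.smul_tmul', smul_eq_mul]

lemma map_tmul_one {E V M : Type} [Semiring E] [Algebra k E] [AddCommMonoid V] [Module k V]
    [AddCommMonoid M] [Module E M] (f : E ⊗[k] V →ₗ[E] M) (x : E) (v : V) :
    f (x ⊗ₜ[k] v) = x • f (1 ⊗ₜ[k] v) := by
  rw [← map_smul, TensorProduct.smul_tmul', smul_eq_mul, mul_one]

lemma env_smul_zero (x : A ⊗[k] Aᵐᵒᵖ) : x • (0 : A) = 0 := smul_zero x

lemma env_smul_add (x : A ⊗[k] Aᵐᵒᵖ) (a b : A) : x • (a + b) = x • a + x • b := smul_add x a b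

lemma env_smul_sub (x : A ⊗[k] Aᵐᵒᵖ) (a b : A) : x • (a - b) = x • a - x • b := smul_sub x a b

variable (k A)

/-- Augmentation of the bar resolution. -/
noncomputable def barE : A ⊗[k] Aᵐᵒᵖ →ₗ[A ⊗[k] Aᵐᵒᵖ] A := LinearMap.toSpanSingleton _ A 1

/-- Generators part of the first bar differential. -/
noncomputable def phi1 : A →ₗ[k] A ⊗[k] Aᵐᵒᵖ :=
  (TensorProduct.mk k A Aᵐᵒᵖ).flip 1 -
    (TensorProduct.mk k A Aᵐᵒᵖ 1) ∘ₗ (MulOpposite.opLinearEquiv k).toLinearMap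

lemma phi1_apply (x : A) : phi1 k A x = x ⊗ₜ 1 - 1 ⊗ₜ MulOpposite.op x := by
  simp [phi1]

/-- Generators part of the second bar differential. -/
noncomputable def phi2 : A ⊗[k] A →ₗ[k] (A ⊗[k] Aᵐᵒᵖ) ⊗[k] A :=
  TensorProduct.lift (LinearMap.mk₂ k
    (fun x y => (x ⊗ₜ[k] (1 : Aᵐᵒᵖ)) ⊗ₜ[k] y - (1 : A ⊗[k] Aᵐᵒᵖ) ⊗ₜ[k] (x * y) +
      ((1 : A) ⊗ₜ[k] MulOpposite.op y) ⊗ₜ[k] x)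
    (by intro x x' y; simp only [add_tmul, tmul_add, add_mul]; abel)
    (by intro c x y; simp only [smul_mul_assoc, tmul_smul, ← smul_tmul', smul_add, smul_sub])
    (by intro x y y'; simp only [add_tmul, tmul_add, mul_add, MulOpposite.op_add]; abel)
    (by intro c x y; simp only [mul_smul_comm, tmul_smul, ← smul_tmul', smul_add, smul_sub,
          MulOpposite.op_smul]))

@[simp] lemma phi2_tmul (x y : A) : phi2 k A (x ⊗ₜ y) =
    (x ⊗ₜ[k] (1 : Aᵐᵒᵖ)) ⊗ₜ[k] y - (1 : A ⊗[k] Aᵐᵒᵖ) ⊗ₜ[k] (x * y) +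
      ((1 : A) ⊗ₜ[k] MulOpposite.op y) ⊗ₜ[k] x := rfl

/-- First bar differential. -/
noncomputable def barD1 : (A ⊗[k] Aᵐᵒᵖ) ⊗[k] A →ₗ[A ⊗[k] Aᵐᵒᵖ] A ⊗[k] Aᵐᵒᵖ := freeLift (phi1 k A)

/-- Second bar differential. -/
noncomputable def barD2 : (A ⊗[k] Aᵐᵒᵖ) ⊗[k] (A ⊗[k] A) →ₗ[A ⊗[k] Aᵐᵒᵖ] (A ⊗[k] Aᵐᵒᵖ) ⊗[k] A :=
  freeLift (phi2 k A)

lemma barD1_one (v : A) : barD1 k A (1 ⊗ₜ v) = v ⊗ₜ 1 - 1 ⊗ₜ MulOpposite.op v := by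
  rw [barD1, freeLift_tmul, phi1_apply]; exact one_mul _

lemma barD1_tmul (a b v : A) : barD1 k A ((a ⊗ₜ MulOpposite.op b) ⊗ₜ v) =
    (a * v) ⊗ₜ MulOpposite.op b - a ⊗ₜ MulOpposite.op (v * b) := by
  rw [barD1, freeLift_tmul, phi1_apply, smul_eq_mul, mul_sub,
    Algebra.TensorProduct.tmul_mul_tmul, Algebra.TensorProduct.tmul_mul_tmul,
    ← MulOpposite.op_mul, mul_one, mul_one]

lemma barD2_tmul (a b u v : A) : barD2 k A ((a ⊗ₜ MulOpposite.op b) ⊗ₜ (u ⊗ₜ v)) =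
    ((a * u) ⊗ₜ MulOpposite.op b) ⊗ₜ v - (a ⊗ₜ MulOpposite.op b) ⊗ₜ (u * v) +
      (a ⊗ₜ MulOpposite.op (v * b)) ⊗ₜ u := by
  rw [barD2, freeLift_tmul, phi2_tmul]
  refine (smul_tri _ _ _ _ _ _ _).trans ?_
  rw [Algebra.TensorProduct.tmul_mul_tmul, Algebra.TensorProduct.tmul_mul_tmul,
    ← MulOpposite.op_mul, mul_one, mul_one, mul_one]

lemma barD2_one (u v : A) : barD2 k A (1 ⊗ₜ (u ⊗ₜ v)) =
    (u ⊗ₜ MulOpposite.op 1) ⊗ₜ v - (1 ⊗ₜ MulOpposite.op 1) ⊗ₜ (u * v) +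
      (1 ⊗ₜ MulOpposite.op v) ⊗ₜ u := by
  have := barD2_tmul k A 1 1 u v
  rw [one_mul, mul_one] at this
  exact this

/-- Contracting homotopy in degree 0. -/
noncomputable def barS0 : A ⊗[k] Aᵐᵒᵖ →ₗ[k] (A ⊗[k] Aᵐᵒᵖ) ⊗[k] A :=
  TensorProduct.lift (LinearMap.mk₂ k (fun a b => ((1 : A) ⊗ₜ[k] b) ⊗ₜ[k] a)
    (by intro x x' y; simp only [tmul_add])
    (by intro c x y; simp only [tmul_smul])
    (by intro x x' y; simp only [tmul_add, add_tmul])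
    (by intro c x y; simp only [tmul_smul, ← smul_tmul']))

@[simp] lemma barS0_tmul (a : A) (b : Aᵐᵒᵖ) :
    barS0 k A (a ⊗ₜ b) = ((1 : A) ⊗ₜ[k] b) ⊗ₜ[k] a := rfl

/-- Contracting homotopy in degree 1. -/
noncomputable def barS1 : (A ⊗[k] Aᵐᵒᵖ) ⊗[k] A →ₗ[k] (A ⊗[k] Aᵐᵒᵖ) ⊗[k] (A ⊗[k] A) :=
  TensorProduct.lift (TensorProduct.lift (LinearMap.mk₂ k
    (fun a b => (TensorProduct.mk k (A ⊗[k] Aᵐᵒᵖ) (A ⊗[k] A) ((1 : A) ⊗ₜ[k] b)) ∘ₗ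
      (TensorProduct.mk k A A a))
    (by intro x x' y; ext; simp [tmul_add])
    (by intro c x y; ext; simp)
    (by intro x x' y; ext; simp [tmul_add])
    (by intro c x y; ext; simp)))

@[simp] lemma barS1_tmul (a : A) (b : Aᵐᵒᵖ) (x : A) :
    barS1 k A ((a ⊗ₜ b) ⊗ₜ x) = ((1 : A) ⊗ₜ[k] b) ⊗ₜ[k] (a ⊗ₜ x) := rfl

lemma barE_tmul (a b : A) : barE k A (a ⊗ₜ MulOpposite.op b) = a * b := by
  simp [barE, env_smul]

lemma barE_surj : Function.Surjective (barE k A) := fun a =>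
  ⟨a ⊗ₜ MulOpposite.op 1, by rw [barE_tmul, mul_one]⟩

lemma barE_D1 (z) : barE k A (barD1 k A z) = 0 := by
  induction z with
  | zero => simp
  | add x y hx hy => simp only [map_add, hx, hy, add_zero]
  | tmul x v =>
    rw [map_tmul_one, barD1_one, LinearMap.map_smul, map_sub, ← MulOpposite.op_one, barE_tmul,
      barE_tmul, mul_one, one_mul, sub_self]
    exact env_smul_zero x

lemma bar_h0 (z : A ⊗[k] Aᵐᵒᵖ) :
    barD1 k A (barS0 k A z) + 1 ⊗ₜ MulOpposite.op (barE k A z) = z := by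
  induction z with
  | zero => simp
  | add x y hx hy =>
    rw [map_add, map_add, map_add, MulOpposite.op_add, tmul_add, add_add_add_comm, hx, hy]
  | tmul a b =>
    obtain ⟨b, rfl⟩ := MulOpposite.op_surjective b
    rw [barS0_tmul, barD1_tmul, barE_tmul, one_mul, sub_add_cancel]

lemma bar_D1D2 (z) : barD1 k A (barD2 k A z) = 0 := by
  induction z with
  | zero => simp
  | add x y hx hy => simp only [map_add, hx, hy, add_zero]
  | tmul x v =>
    induction v with
    | zero => simp
    | add v w hv hw => rw [tmul_add, map_add, map_add, hv, hw, add_zero]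
    | tmul u v =>
      induction x with
      | zero => simp
      | add x y hx hy => simp only [add_tmul, map_add, hx, hy, add_zero]
      | tmul a b =>
        obtain ⟨b, rfl⟩ := MulOpposite.op_surjective b
        rw [barD2_tmul, map_add, map_sub, barD1_tmul, barD1_tmul, barD1_tmul, mul_assoc, mul_assoc]
        abel

lemma bar_h1 (z) : barD2 k A (barS1 k A z) + barS0 k A (barD1 k A z) = z := by
  induction z with
  | zero => simp
  | add x y hx hy =>
    rw [map_add, map_add, map_add, map_add, add_add_add_comm, hx, hy]
  | tmul x v =>
    induction x with
    | zero => simp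
    | add x y hx hy =>
      rw [add_tmul, map_add, map_add, map_add, map_add, add_add_add_comm, hx, hy]
    | tmul a b =>
      obtain ⟨b, rfl⟩ := MulOpposite.op_surjective b
      rw [barS1_tmul, barD2_tmul, barD1_tmul, map_sub, barS0_tmul, barS0_tmul, one_mul]
      abel

lemma bar_exact0 : Function.Exact (barD1 k A) (barE k A) := by
  intro z
  constructor
  · intro h
    have := bar_h0 k A z
    rw [h] at this
    exact ⟨barS0 k A z, by simpa using this⟩
  · rintro ⟨y, rfl⟩
    exact barE_D1 k A y

lemma bar_exact1 : Function.Exact (barD2 k A) (barD1 k A) := by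
  intro z
  constructor
  · intro h
    have := bar_h1 k A z
    rw [h] at this
    exact ⟨barS1 k A z, by simpa using this⟩
  · rintro ⟨y, rfl⟩
    exact bar_D1D2 k A y

/-- Hochschild 2-cocycles. -/
structure Z2 : Type where
  /-- the underlying bilinear map -/
  μ : A →ₗ[k] A →ₗ[k] A
  cocycle : ∀ a b c, a * μ b c - μ (a * b) c + μ a (b * c) - μ a b * c = 0

/-- Two cocycles are cohomologous. -/
def Cohom (μ ν : Z2 k A) : Prop :=
  ∃ g : A →ₗ[k] A, ∀ a b, μ.1 a b - ν.1 a b = a * g b - g (a * b) + g a * b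

/-- The map on the bar complex defined by a bilinear map. -/
noncomputable def barF (μ : A →ₗ[k] A →ₗ[k] A) :
    (A ⊗[k] Aᵐᵒᵖ) ⊗[k] (A ⊗[k] A) →ₗ[A ⊗[k] Aᵐᵒᵖ] A := freeLift (TensorProduct.lift μ)

lemma barF_tmul (μ : A →ₗ[k] A →ₗ[k] A) (a b x y : A) :
    barF k A μ ((a ⊗ₜ MulOpposite.op b) ⊗ₜ (x ⊗ₜ y)) = a * (μ x y * b) := by
  rw [barF, freeLift_tmul, env_smul]; rfl

lemma barF_one (μ : A →ₗ[k] A →ₗ[k] A) (x y : A) :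
    barF k A μ (1 ⊗ₜ (x ⊗ₜ y)) = μ x y := by
  rw [barF, freeLift_tmul, one_smul]; rfl

lemma barF_h2 (μ : A →ₗ[k] A →ₗ[k] A)
    (hμ : ∀ a b c, a * μ b c - μ (a * b) c + μ a (b * c) - μ a b * c = 0) (z) :
    barF k A μ z = barF k A μ (barS1 k A (barD2 k A z)) := by
  induction z with
  | zero => simp
  | add x y hx hy => simp only [map_add, hx, hy]
  | tmul x v =>
    induction v with
    | zero => simp
    | add v w hv hw => simp only [tmul_add, map_add, hv, hw]
    | tmul u v =>
      induction x with
      | zero => simp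
      | add x y hx hy => simp only [add_tmul, map_add, hx, hy]
      | tmul a b =>
        obtain ⟨b, rfl⟩ := MulOpposite.op_surjective b
        rw [barD2_tmul]
        simp only [map_sub, map_add, barS1_tmul, barF_tmul, one_mul]
        have := congrArg (· * b) (hμ a u v)
        simp only [sub_mul, add_mul, zero_mul, mul_assoc] at this
        rw [← sub_eq_zero, ← this]
        abel

/-- The bar computation of `Ext²`. -/
theorem ext2_cocycles : ∃ F : Z2 k A → ((Ext ℤ (ModuleCat.{0} (A ⊗[k] Aᵐᵒᵖ)) 2).obj
            (Opposite.op (ModuleCat.of (A ⊗[k] Aᵐᵒᵖ) A))).obj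
          (ModuleCat.of (A ⊗[k] Aᵐᵒᵖ) A),
    Function.Surjective F ∧ ∀ μ ν, F μ = F ν ↔ Cohom k A μ ν := by
  obtain ⟨F, hF, hF'⟩ := ext2_surj (R := A ⊗[k] Aᵐᵒᵖ) (Z := A) (P0 := A ⊗[k] Aᵐᵒᵖ)
    (P1 := (A ⊗[k] Aᵐᵒᵖ) ⊗[k] A) (P2 := (A ⊗[k] Aᵐᵒᵖ) ⊗[k] (A ⊗[k] A)) (barE k A) (barD1 k A) (barD2 k A) (barE_surj k A)
    (bar_exact0 k A) (bar_exact1 k A) A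
  refine ⟨fun μ => F ⟨barF k A μ.1, fun z hz => ?_⟩, ?_, ?_⟩
  · rw [barF_h2 k A μ.1 μ.2, hz, map_zero, map_zero]
  · intro x
    obtain ⟨⟨f, hf⟩, rfl⟩ := hF x
    let μ : A →ₗ[k] A →ₗ[k] A :=
      TensorProduct.curry ((f.restrictScalars k) ∘ₗ (TensorProduct.mk k (A ⊗[k] Aᵐᵒᵖ) (A ⊗[k] A) 1))
    have hμ : ∀ a b, μ a b = f (1 ⊗ₜ (a ⊗ₜ b)) := fun a b => rfl
    have hfs : ∀ a b x y, f ((a ⊗ₜ MulOpposite.op b) ⊗ₜ (x ⊗ₜ y)) = a * (μ x y * b) := by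
      intro a b x y
      rw [hμ, ← env_smul k, map_tmul_one]
    refine ⟨⟨μ, fun a b c => ?_⟩, ?_⟩
    · have h := hf ((a ⊗ₜ MulOpposite.op 1) ⊗ₜ (b ⊗ₜ c) - (1 ⊗ₜ MulOpposite.op 1) ⊗ₜ ((a * b) ⊗ₜ c) +
        (1 ⊗ₜ MulOpposite.op 1) ⊗ₜ (a ⊗ₜ (b * c)) - (1 ⊗ₜ MulOpposite.op c) ⊗ₜ (a ⊗ₜ b)) (by
          simp only [map_sub, map_add, barD2_tmul, one_mul, mul_one, mul_assoc]
          abel)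
      simpa only [map_sub, map_add, hfs, one_mul, mul_one] using h
    · refine congrArg F (Subtype.ext (LinearMap.ext fun z => ?_))
      change barF k A μ z = f z
      induction z with
      | zero => simp
      | add x y hx hy => simp only [map_add, hx, hy]
      | tmul x v =>
        induction v with
        | zero => simp
        | add v w hv hw => simp only [tmul_add, map_add, hv, hw]
        | tmul u v =>
          induction x with
          | zero => simp
          | add x y hx hy => simp only [add_tmul, map_add, hx, hy]
          | tmul a b =>
            obtain ⟨b, rfl⟩ := MulOpposite.op_surjective b
            rw [hfs, barF_tmul]
  · intro μ ν
    rw [hF']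
    constructor
    · rintro ⟨g, hg⟩
      refine ⟨(g.restrictScalars k) ∘ₗ (TensorProduct.mk k (A ⊗[k] Aᵐᵒᵖ) A 1), fun a b => ?_⟩
      have hgs : ∀ a b x, g ((a ⊗ₜ MulOpposite.op b) ⊗ₜ x) = a * (g (1 ⊗ₜ x) * b) := by
        intro a b x
        rw [← env_smul k, map_tmul_one]
      have := LinearMap.congr_fun hg (1 ⊗ₜ (a ⊗ₜ b))
      rw [LinearMap.sub_apply, barF_one, barF_one, LinearMap.comp_apply, barD2_one, map_add, map_sub,
        hgs, hgs, hgs, mul_one, mul_one, one_mul, one_mul] at this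
      exact this
    · rintro ⟨g, hg⟩
      refine ⟨freeLift g, LinearMap.ext fun z => ?_⟩
      induction z with
      | zero => simp
      | add x y hx hy => rw [map_add, map_add, hx, hy]
      | tmul x v =>
        induction v with
        | zero => simp
        | add v w hv hw => rw [tmul_add, map_add, map_add, hv, hw]
        | tmul u v =>
          rw [map_tmul_one (barF k A μ.1 - barF k A ν.1), map_tmul_one (freeLift g ∘ₗ barD2 k A)]
          congr 1
          rw [LinearMap.sub_apply, barF_one, barF_one, LinearMap.comp_apply, barD2_one, map_add,
            map_sub, freeLift_tmul, freeLift_tmul, freeLift_tmul, env_smul, env_smul, env_smul, hg]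
          simp only [mul_one, one_mul]

end Bar
section Deform

variable {k A}

/-- The deformation attached to a cocycle: underlying type. -/
@[ext] structure Bm (m : Z2 k A) : Type where
  /-- constant term -/
  a : A
  /-- coefficient of `ε` -/
  b : A

namespace Bm

variable {m : Z2 k A}

/-- `Bm m` as a product. -/
def eqv (m : Z2 k A) : Bm m ≃ A × A where
  toFun x := (x.a, x.b)
  invFun x := ⟨x.1, x.2⟩
  left_inv _ := rfl
  right_inv _ := rfl

instance : AddCommGroup (Bm m) := (eqv m).addCommGroup

@[simp] lemma add_a (x y : Bm m) : (x + y).a = x.a + y.a := rfl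
@[simp] lemma add_b (x y : Bm m) : (x + y).b = x.b + y.b := rfl
@[simp] lemma zero_a : (0 : Bm m).a = 0 := rfl
@[simp] lemma zero_b : (0 : Bm m).b = 0 := rfl

instance : Mul (Bm m) := ⟨fun x y => ⟨x.a * y.a, x.a * y.b + x.b * y.a + m.μ x.a y.a⟩⟩
instance : One (Bm m) := ⟨⟨1, - m.μ 1 1⟩⟩

@[simp] lemma mul_a (x y : Bm m) : (x * y).a = x.a * y.a := rfl
@[simp] lemma mul_b (x y : Bm m) : (x * y).b = x.a * y.b + x.b * y.a + m.μ x.a y.a := rfl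
@[simp] lemma one_a : (1 : Bm m).a = 1 := rfl
@[simp] lemma one_b : (1 : Bm m).b = - m.μ 1 1 := rfl

lemma mu_one (m : Z2 k A) (a : A) : m.μ a 1 = a * m.μ 1 1 := by
  have := m.cocycle a 1 1
  simp only [mul_one] at this
  rw [sub_add_cancel, sub_eq_zero] at this
  exact this.symm

lemma one_mu (m : Z2 k A) (a : A) : m.μ 1 a = m.μ 1 1 * a := by
  have := m.cocycle 1 1 a
  simp only [one_mul] at this
  rw [sub_self, zero_add, sub_eq_zero] at this
  exact this

instance : Ring (Bm m) :=
  { (inferInstance : AddCommGroup (Bm m)) with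
    mul := (· * ·)
    one := 1
    left_distrib := fun x y z => by ext <;> simp [mul_add]; abel
    right_distrib := fun x y z => by ext <;> simp [add_mul]; abel
    zero_mul := fun x => by ext <;> simp
    mul_zero := fun x => by ext <;> simp
    one_mul := fun x => by ext <;> simp [one_mu m x.a]
    mul_one := fun x => by ext <;> simp [mu_one m x.a]
    mul_assoc := fun x y z => by
      ext
      · simp [mul_assoc]
      · have := m.cocycle x.a y.a z.a
        simp only [mul_a, mul_b, mul_add, add_mul, mul_assoc]
        rw [← sub_eq_zero, ← neg_eq_zero, ← this]
        abel }

instance : SMul (DualNumber k) (Bm m) :=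
  ⟨fun d x => ⟨d.fst • x.a, d.fst • x.b + d.snd • x.a⟩⟩

@[simp] lemma smul_a (d : DualNumber k) (x : Bm m) : (d • x).a = d.fst • x.a := rfl
@[simp] lemma smul_b (d : DualNumber k) (x : Bm m) :
    (d • x).b = d.fst • x.b + d.snd • x.a := rfl

instance : Module (DualNumber k) (Bm m) where
  one_smul x := by ext <;> simp
  mul_smul c d x := by
    ext
    · simp [mul_smul]
    · simp [mul_smul, add_smul, smul_add, add_assoc, smul_comm c.snd d.fst]
  smul_zero c := by ext <;> simp
  zero_smul c := by ext <;> simp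
  smul_add c x y := by
    ext
    · simp
    · simp; abel
  add_smul c d x := by
    ext
    · simp [add_smul]
    · simp [add_smul]; abel

noncomputable instance : Algebra (DualNumber k) (Bm m) :=
  Algebra.ofModule
    (fun c x y => by
      ext
      · simp
      · simp only [smul_b, mul_b, smul_a, mul_a, smul_mul_assoc, add_mul, smul_add, map_smul,
          LinearMap.smul_apply]
        abel)
    (fun c x y => by
      ext
      · simp
      · simp only [smul_b, mul_b, smul_a, mul_a, mul_smul_comm, mul_add, smul_add, map_smul]
        abel)

lemma flat (m : Z2 k A) : Module.Flat (DualNumber k) (Bm m) := by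
  letI : Module k (Bm m) := Module.compHom _ (algebraMap k (DualNumber k))
  have hk : ∀ (c : k) (x : Bm m), c • x = (algebraMap k (DualNumber k) c) • x := fun _ _ => rfl
  haveI : IsScalarTower k (DualNumber k) (Bm m) := ⟨fun c d x => by
    rw [hk, smul_smul, Algebra.smul_def]⟩
  let j : A →ₗ[k] Bm m :=
    { toFun := fun a => ⟨a, 0⟩
      map_add' := fun a b => by ext <;> simp
      map_smul' := fun c a => by
        ext <;> simp [hk, TrivSqZeroExt.algebraMap_eq_inl] }
  let L : DualNumber k ⊗[k] A →ₗ[DualNumber k] Bm m :=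
    TensorProduct.AlgebraTensorModule.lift (LinearMap.toSpanSingleton _ (A →ₗ[k] Bm m) j)
  have hL : ∀ d a, L (d ⊗ₜ a) = ⟨d.fst • a, d.snd • a⟩ := by
    intro d a
    have : L (d ⊗ₜ a) = d • j a := by simp [L]
    rw [this]
    ext <;> simp [j]
  have hl : ∀ z, (1 : DualNumber k) ⊗ₜ[k] (L z).a + (DualNumber.eps : DualNumber k) ⊗ₜ[k] (L z).b = z := by
    intro z
    induction z with
    | zero => simp
    | add x y hx hy =>
      rw [map_add, add_a, add_b, tmul_add, tmul_add, add_add_add_comm, hx, hy]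
    | tmul d a =>
      rw [hL, tmul_smul, tmul_smul, smul_tmul', smul_tmul', ← add_tmul]
      congr 1
      ext <;> simp
  have hbij : Function.Bijective L := by
    constructor
    · intro x y h
      rw [← hl x, ← hl y, h]
    · intro x
      refine ⟨(1 : DualNumber k) ⊗ₜ[k] x.a + (DualNumber.eps : DualNumber k) ⊗ₜ[k] x.b, ?_⟩
      rw [map_add, hL, hL]
      ext <;> simp
  exact Module.Flat.of_linearEquiv (LinearEquiv.ofBijective L hbij).symm

lemma exists_iso (m : Z2 k A) : ∃ e : (k ⊗[DualNumber k] Bm m) ≃ₐ[k] A,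
    ∀ (x : k) (b : Bm m), e (x ⊗ₜ[DualNumber k] b) = x • b.a := by
  letI : Algebra (DualNumber k) A := Algebra.compHom A (algebraMap (DualNumber k) k)
  have hk : ∀ (d : DualNumber k) (x : A), d • x = d.fst • x := fun _ _ => rfl
  haveI : IsScalarTower (DualNumber k) k A := ⟨fun d c x => by
    rw [hk, smul_smul]; rfl⟩
  let g : Bm m →ₐ[DualNumber k] A := AlgHom.ofLinearMap
    { toFun := fun x => x.a
      map_add' := fun _ _ => rfl
      map_smul' := fun _ _ => rfl } rfl (fun _ _ => rfl)
  let Φ : k ⊗[DualNumber k] Bm m →ₐ[k] A :=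
    Algebra.TensorProduct.lift (Algebra.ofId k A) g (fun x y => Algebra.commutes _ _)
  have hΦ : ∀ (x : k) (b : Bm m), Φ (x ⊗ₜ[DualNumber k] b) = x • b.a := by
    intro x b
    rw [Algebra.smul_def]
    rfl
  have hl : ∀ z, (1 : k) ⊗ₜ[DualNumber k] (⟨Φ z, 0⟩ : Bm m) = z := by
    intro z
    induction z with
    | zero =>
      have : (⟨Φ 0, 0⟩ : Bm m) = 0 := by ext <;> simp
      rw [this, tmul_zero]
    | add x y hx hy =>
      have : (⟨Φ (x + y), 0⟩ : Bm m) = ⟨Φ x, 0⟩ + ⟨Φ y, 0⟩ := by ext <;> simp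
      rw [this, tmul_add, hx, hy]
    | tmul x b =>
      have h1 : (⟨Φ (x ⊗ₜ b), 0⟩ : Bm m) = (TrivSqZeroExt.inl x : DualNumber k) • ⟨b.a, 0⟩ := by
        ext <;> simp [hΦ]
      have h2 : b = ⟨b.a, 0⟩ + (DualNumber.eps : DualNumber k) • ⟨b.b, 0⟩ := by
        ext <;> simp
      have h3 : (TrivSqZeroExt.inl x : DualNumber k) • (1 : k) = x := by
        rw [Algebra.smul_def]; exact mul_one x
      have h4 : (DualNumber.eps : DualNumber k) • x = 0 := by
        rw [Algebra.smul_def]; exact zero_mul x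
      rw [h1, ← smul_tmul, h3]
      conv_rhs => rw [h2, tmul_add, ← smul_tmul, h4, zero_tmul, add_zero]
  refine ⟨AlgEquiv.ofBijective Φ ⟨fun x y h => ?_, fun a => ⟨1 ⊗ₜ ⟨a, 0⟩, ?_⟩⟩, hΦ⟩
  · rw [← hl x, ← hl y, h]
  · rw [hΦ, one_smul]

/-- The deformation attached to a cocycle. -/
noncomputable def deform (m : Z2 k A) : FirstOrderDeformation k A where
  B := Bm m
  flat := flat m
  iso := (exists_iso m).choose

lemma deform_iso (m : Z2 k A) (x : k) (b : Bm m) :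
    (deform m).iso (x ⊗ₜ[DualNumber k] b) = x • b.a := (exists_iso m).choose_spec x b

end Bm

end Deform
section Final

variable {k A}

lemma Equivalent.refl' (d : FirstOrderDeformation k A) : Equivalent k A d d :=
  ⟨AlgEquiv.refl, fun _ _ => rfl⟩

lemma Equivalent.symm' {d d' : FirstOrderDeformation k A} (h : Equivalent k A d d') :
    Equivalent k A d' d := by
  obtain ⟨ψ, h⟩ := h
  refine ⟨ψ.symm, fun x b => ?_⟩
  rw [← h, AlgEquiv.apply_symm_apply]

lemma Equivalent.trans' {d d' d'' : FirstOrderDeformation k A} (h : Equivalent k A d d')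
    (h' : Equivalent k A d' d'') : Equivalent k A d d'' := by
  obtain ⟨ψ, h⟩ := h
  obtain ⟨φ, h'⟩ := h'
  refine ⟨ψ.trans φ, fun x b => ?_⟩
  rw [← h, ← h']
  rfl

lemma equivalent_equivalence : Equivalence (Equivalent k A) :=
  ⟨Equivalent.refl', Equivalent.symm', Equivalent.trans'⟩

lemma quot_eq_iff (d d' : FirstOrderDeformation k A) :
    Quot.mk (Equivalent k A) d = Quot.mk (Equivalent k A) d' ↔ Equivalent k A d d' :=
  equivalent_equivalence.quot_mk_eq_iff d d'

lemma cohom_of_algEquiv {m n : Z2 k A} (ψ : Bm m ≃ₐ[DualNumber k] Bm n)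
    (h : ∀ x, (ψ x).a = x.a) : Cohom k A m n := by
  have he : ∀ a, ψ ⟨0, a⟩ = ⟨0, a⟩ := by
    intro a
    have h1 : (⟨0, a⟩ : Bm m) = (DualNumber.eps : DualNumber k) • ⟨a, 0⟩ := by
      ext <;> simp
    rw [h1, map_smul]
    ext <;> simp [h]
  have hψ : ∀ x, (ψ x).b = x.b + (ψ ⟨x.a, 0⟩).b := by
    intro x
    have h1 : x = ⟨x.a, 0⟩ + ⟨0, x.b⟩ := by ext <;> simp
    conv_lhs => rw [h1, map_add, he]
    simp [add_comm]
  refine ⟨{ toFun := fun a => (ψ ⟨a, 0⟩).b, map_add' := ?_, map_smul' := ?_ }, ?_⟩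
  · intro a b
    have h1 : (⟨a + b, 0⟩ : Bm m) = ⟨a, 0⟩ + ⟨b, 0⟩ := by ext <;> simp
    rw [h1, map_add]; rfl
  · intro c a
    have h1 : (⟨c • a, 0⟩ : Bm m) = (TrivSqZeroExt.inl c : DualNumber k) • ⟨a, 0⟩ := by
      ext <;> simp
    rw [h1, map_smul]; simp
  · intro a b
    have h1 := congrArg Bm.b (map_mul ψ ⟨a, 0⟩ ⟨b, 0⟩)
    rw [hψ] at h1
    simp only [Bm.mul_b, Bm.mul_a, h, mul_zero, zero_mul, zero_add] at h1
    simp only [LinearMap.coe_mk, AddHom.coe_mk]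
    rw [eq_sub_of_add_eq h1]
    abel

lemma algEquiv_of_cohom {m n : Z2 k A} (h : Cohom k A m n) :
    ∃ ψ : Bm m ≃ₐ[DualNumber k] Bm n, ∀ x, (ψ x).a = x.a := by
  obtain ⟨g, hg⟩ := h
  let f : Bm m →ₗ[DualNumber k] Bm n :=
    { toFun := fun x => ⟨x.a, x.b + g x.a⟩
      map_add' := fun x y => by
        ext
        · simp
        · simp; abel
      map_smul' := fun c x => by
        ext
        · simp
        · simp; abel }
  have hmul : ∀ x y, f (x * y) = f x * f y := by
    intro x y
    ext
    · rfl
    · have h1 := hg x.a y.a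
      simp only [f, LinearMap.coe_mk, AddHom.coe_mk, Bm.mul_b, Bm.mul_a, mul_add, add_mul]
      rw [eq_add_of_sub_eq h1]
      abel
  have hone : f 1 = 1 := by
    ext
    · rfl
    · have h1 := hg 1 1
      simp only [f, LinearMap.coe_mk, AddHom.coe_mk, Bm.one_b, Bm.one_a]
      rw [eq_add_of_sub_eq h1]
      simp
  have hbij : Function.Bijective f := by
    constructor
    · intro x y hxy
      have ha : x.a = y.a := congrArg (Bm.a (m := n)) hxy
      have hb : x.b + g x.a = y.b + g y.a := congrArg (Bm.b (m := n)) hxy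
      rw [ha] at hb
      exact Bm.ext ha (add_right_cancel hb)
    · intro y
      refine ⟨⟨y.a, y.b - g y.a⟩, ?_⟩
      ext <;> simp [f]
  exact ⟨AlgEquiv.ofBijective (AlgHom.ofLinearMap f hone hmul) hbij, fun x => rfl⟩

lemma deform_equivalent_iff (m n : Z2 k A) :
    Equivalent k A (Bm.deform m) (Bm.deform n) ↔ Cohom k A m n := by
  constructor
  · rintro ⟨ψ, h⟩
    refine cohom_of_algEquiv (ψ : Bm m ≃ₐ[DualNumber k] Bm n) (fun x => ?_)
    have h1 := h 1 x
    have h2 := Bm.deform_iso n 1 (ψ x)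
    have h3 := Bm.deform_iso m 1 x
    rw [one_smul] at h2 h3
    exact h2.symm.trans (h1.trans h3)
  · intro h
    obtain ⟨ψ, h⟩ := algEquiv_of_cohom h
    refine ⟨ψ, fun x b => ?_⟩
    have h2 := Bm.deform_iso n x (ψ b)
    have h3 := Bm.deform_iso m x b
    exact (h2.trans (congrArg (x • ·) (h b))).trans h3.symm

section Flat

variable {B : Type} [AddCommGroup B] [Module (DualNumber k) B]

lemma exists_eps_of_tmul_eq_zero (b : B) (h : (1 : k) ⊗ₜ[DualNumber k] b = 0) :
    ∃ c : B, b = (DualNumber.eps : DualNumber k) • c := by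
  let f : DualNumber k →ₗ[DualNumber k] DualNumber k :=
    LinearMap.toSpanSingleton _ _ DualNumber.eps
  let g : DualNumber k →ₗ[DualNumber k] k := Algebra.linearMap (DualNumber k) k
  have hg : ∀ d, g d = d.fst := fun _ => rfl
  have hex : Function.Exact f g := by
    intro d
    rw [hg]
    constructor
    · intro hd
      refine ⟨TrivSqZeroExt.inl d.snd, ?_⟩
      ext <;> simp [f, hd]
    · rintro ⟨c, rfl⟩
      simp [f]
  have hs : Function.Surjective g := fun x => ⟨TrivSqZeroExt.inl x, rfl⟩
  obtain ⟨z, hz⟩ := (rTensor_exact B hex hs ((1 : DualNumber k) ⊗ₜ[DualNumber k] b)).1 (by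
    rw [LinearMap.rTensor_tmul]
    exact h)
  obtain ⟨c, rfl⟩ := (TensorProduct.lid (DualNumber k) B).symm.surjective z
  refine ⟨c, ?_⟩
  have := congrArg (TensorProduct.lid (DualNumber k) B) hz
  simpa [f] using this.symm

lemma exists_eps_of_eps_smul_eq_zero [Module.Flat (DualNumber k) B] (b : B)
    (h : (DualNumber.eps : DualNumber k) • b = 0) :
    ∃ c : B, b = (DualNumber.eps : DualNumber k) • c := by
  let f : DualNumber k →ₗ[DualNumber k] DualNumber k :=
    LinearMap.toSpanSingleton _ _ DualNumber.eps
  have hex : Function.Exact f f := by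
    intro d
    constructor
    · intro hd
      have hd' := congrArg TrivSqZeroExt.snd hd
      refine ⟨TrivSqZeroExt.inl d.snd, ?_⟩
      simp [f] at hd'
      ext <;> simp [f, hd']
    · rintro ⟨c, rfl⟩
      ext <;> simp [f]
  obtain ⟨z, hz⟩ := (Module.Flat.rTensor_exact B hex ((1 : DualNumber k) ⊗ₜ[DualNumber k] b)).1 (by
    apply (TensorProduct.lid (DualNumber k) B).injective
    simpa [f] using h)
  obtain ⟨c, rfl⟩ := (TensorProduct.lid (DualNumber k) B).symm.surjective z
  refine ⟨c, ?_⟩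
  have := congrArg (TensorProduct.lid (DualNumber k) B) hz
  simpa [f] using this.symm

lemma one_tmul_smul (c : DualNumber k) (b : B) :
    (1 : k) ⊗ₜ[DualNumber k] (c • b) = c.fst ⊗ₜ[DualNumber k] b := by
  rw [← smul_tmul]
  congr 1
  rw [Algebra.smul_def]; exact mul_one c.fst

lemma exists_one_tmul (z : k ⊗[DualNumber k] B) :
    ∃ b : B, z = (1 : k) ⊗ₜ[DualNumber k] b := by
  induction z with
  | zero => exact ⟨0, (tmul_zero _ _).symm⟩
  | add x y hx hy =>
    obtain ⟨b, rfl⟩ := hx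
    obtain ⟨c, rfl⟩ := hy
    exact ⟨b + c, (tmul_add _ _ _).symm⟩
  | tmul x b =>
    refine ⟨(TrivSqZeroExt.inl x : DualNumber k) • b, ?_⟩
    rw [← smul_tmul]
    congr 1
    rw [Algebra.smul_def]; exact (mul_one x).symm

end Flat

/-- Splitting a deformation, abstract version. -/
lemma exists_cocycle_aux {D B : Type} [CommRing D] [Algebra k D] [Ring B] [Algebra D B]
    (ε : D) (fst snd : D → k) (hεε0 : ε * ε = 0) (hfst : ∀ c, fst (algebraMap k D c) = c)
    (hfε : fst ε = 0) (hD : ∀ d, d = algebraMap k D (fst d) + algebraMap k D (snd d) * ε)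
    (p : B →+* A) (hsm : ∀ (c : D) b, p (c • b) = fst c • p b)
    (hsurj : Function.Surjective p)
    (hker : ∀ b, p b = 0 → ∃ c, b = ε • c)
    (hflat : ∀ b : B, ε • b = 0 → ∃ c, b = ε • c) :
    ∃ (M : Z2 k A) (F : A → A → B),
      (∀ a b a' b', F (a + a') (b + b') = F a b + F a' b') ∧
      (∀ c a b, F (fst c • a) (fst c • b + snd c • a) = c • F a b) ∧
      (∀ a b a' b', F (a * a') (a * b' + b * a' + M.μ a a') = F a b * F a' b') ∧
      (∀ a b, p (F a b) = a) ∧ (∀ a b, F a b = 0 → a = 0 ∧ b = 0) ∧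
      (∀ z, ∃ a b, F a b = z) := by
  letI : Module k B := Module.compHom _ (algebraMap k D)
  have hk : ∀ (c : k) (x : B), c • x = (algebraMap k D c) • x :=
    fun _ _ => rfl
  let pl : B →ₗ[k] A :=
    { toFun := p
      map_add' := map_add p
      map_smul' := fun c x => by rw [hk, hsm, hfst]; rfl }
  obtain ⟨s, hs⟩ := pl.exists_rightInverse_of_surjective (LinearMap.range_eq_top.2 hsurj)
  have hps : ∀ a, p (s a) = a := fun a => LinearMap.congr_fun hs a
  have hεε : ∀ b : B, ε • ε • b = 0 := by
    intro b
    rw [smul_smul, hεε0, zero_smul]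
  have hpε : ∀ b, p (ε • b) = 0 := by
    intro b
    rw [hsm, hfε, zero_smul]
  have hinj : ∀ a a', s a + ε • s a' = 0 → a = 0 ∧ a' = 0 := by
    intro a a' h
    have ha : a = 0 := by
      have := congrArg p h
      rwa [map_add, hps, hpε, add_zero, map_zero] at this
    subst ha
    rw [map_zero, zero_add] at h
    obtain ⟨c, hc⟩ := hflat _ h
    refine ⟨rfl, ?_⟩
    rw [← hps a', hc, hpε]
  have hεs : ∀ b, ε • b = ε • s (p b) := by
    intro b
    obtain ⟨c, hc⟩ := hker (b - s (p b)) (by rw [map_sub, hps, sub_self])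
    rw [eq_add_of_sub_eq hc, smul_add, hεε, zero_add, map_add, hpε, zero_add, hps]
  have hinj' : ∀ a a', ε • s a = ε • s a' → a = a' := by
    intro a a' h
    have := (hinj 0 (a - a') (by rw [map_zero, zero_add, map_sub, smul_sub, h, sub_self])).2
    exact sub_eq_zero.1 this
  have hex : ∀ a b, ∃ c, s a * s b = s (a * b) + ε • s c := by
    intro a b
    obtain ⟨c, hc⟩ := hker (s a * s b - s (a * b)) (by
      rw [map_sub, map_mul, hps, hps, hps, sub_self])
    refine ⟨p c, ?_⟩
    rw [← hεs, ← hc, add_sub_cancel]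
  choose m hm using hex
  have hm' : ∀ a b, ε • s (m a b) = s a * s b - s (a * b) := fun a b => by
    rw [hm, add_sub_cancel_left]
  have hkε : ∀ (c : k) (b : B), ε • (c • b) = c • (ε • b) := fun c b => by
    rw [hk, hk, smul_smul, smul_smul, mul_comm]
  have hkl : ∀ (c : k) (a b : B), (c • a) * b = c • (a * b) := fun c a b => by
    rw [hk, hk, smul_mul_assoc]
  have hkr : ∀ (c : k) (a b : B), a * (c • b) = c • (a * b) := fun c a b => by
    rw [hk, hk, mul_smul_comm]
  let μ : A →ₗ[k] A →ₗ[k] A := LinearMap.mk₂ k m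
    (fun a b c => hinj' _ _ (by
      rw [map_add, smul_add, hm', hm', hm', map_add, add_mul, add_mul, map_add]; abel))
    (fun c a b => hinj' _ _ (by
      rw [map_smul, hkε, hm', hm', map_smul, hkl, smul_mul_assoc, map_smul, smul_sub]))
    (fun a b c => hinj' _ _ (by
      rw [map_add, smul_add, hm', hm', hm', map_add, mul_add, mul_add, map_add]; abel))
    (fun c a b => hinj' _ _ (by
      rw [map_smul, hkε, hm', hm', map_smul, hkr, mul_smul_comm, map_smul, smul_sub]))
  have hμ : ∀ a b, μ a b = m a b := fun _ _ => rfl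
  have hl : ∀ a b, ε • s (a * b) = s a * (ε • s b) := fun a b => by
    rw [mul_smul_comm, hεs (s a * s b), map_mul p, hps, hps]
  have hr : ∀ a b, ε • s (a * b) = (ε • s a) * s b := fun a b => by
    rw [smul_mul_assoc, hεs (s a * s b), map_mul p, hps, hps]
  let M : Z2 k A := ⟨μ, fun a b c => by
    apply hinj'
    simp only [hμ, map_sub, map_add, map_zero, smul_sub, smul_add, smul_zero]
    rw [hl, hr, hm', hm', hm', hm']
    simp only [mul_sub, sub_mul, mul_assoc]
    abel⟩
  refine ⟨M, fun a b => s a + ε • s b, ?_, ?_, ?_, ?_, hinj, ?_⟩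
  · intro a b a' b'
    simp only [map_add, smul_add]; abel
  · intro c a b
    simp only [map_add, smul_add, map_smul, hkε]
    conv_rhs => rw [hD c]
    simp only [add_smul, mul_smul, hεε, smul_zero, add_zero, ← hk]
    abel
  · intro a b a' b'
    have h0 : (ε • s b) * (ε • s b') = 0 := by
      rw [smul_mul_assoc, mul_smul_comm, hεε]
    have h1 : M.μ a a' = m a a' := rfl
    rw [h1]
    simp only [map_add, smul_add, mul_add, add_mul]
    rw [h0, hl, hr, hm']
    abel
  · intro a b
    rw [map_add, hps, hpε, add_zero]
  · intro b
    obtain ⟨c, hc⟩ := hker (b - s (p b)) (by rw [map_sub, hps, sub_self])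
    refine ⟨p b, p c, ?_⟩
    change s (p b) + ε • s (p c) = b
    rw [← hεs, ← hc, add_sub_cancel]

/-- Splitting a deformation. -/
lemma exists_cocycle {B : Type} [Ring B] [Algebra (DualNumber k) B]
    (p : B →+* A) (hsm : ∀ (c : DualNumber k) b, p (c • b) = c.fst • p b)
    (hsurj : Function.Surjective p)
    (hker : ∀ b, p b = 0 → ∃ c, b = (DualNumber.eps : DualNumber k) • c)
    (hflat : ∀ b : B, (DualNumber.eps : DualNumber k) • b = 0 →
      ∃ c, b = (DualNumber.eps : DualNumber k) • c) :
    ∃ (m : Z2 k A) (ψ : Bm m ≃ₐ[DualNumber k] B), ∀ x, p (ψ x) = x.a := by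
  obtain ⟨M, F, hadd, hsmul, hmul', hpF, hinj, hsur⟩ :=
    exists_cocycle_aux (DualNumber.eps : DualNumber k) TrivSqZeroExt.fst TrivSqZeroExt.snd
      (DualNumber.eps_mul_eps) (fun c => rfl) (DualNumber.fst_eps)
      (fun d => by ext <;> simp [TrivSqZeroExt.algebraMap_eq_inl]) p hsm hsurj hker hflat
  let f : Bm M →ₗ[DualNumber k] B :=
    { toFun := fun x => F x.a x.b
      map_add' := fun x y => hadd _ _ _ _
      map_smul' := fun c x => hsmul _ _ _ }
  have hmul : ∀ x y, f (x * y) = f x * f y := fun x y => hmul' _ _ _ _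
  have hbij : Function.Bijective f := by
    constructor
    · rw [injective_iff_map_eq_zero]
      intro x hx
      obtain ⟨h1, h2⟩ := hinj _ _ hx
      exact Bm.ext h1 h2
    · intro z
      obtain ⟨a, b, h⟩ := hsur z
      exact ⟨⟨a, b⟩, h⟩
  have hone : f 1 = 1 := by
    obtain ⟨x, hx⟩ := hbij.2 1
    have := hmul 1 x
    rw [one_mul, hx, mul_one] at this
    exact this.symm
  exact ⟨M, AlgEquiv.ofBijective (AlgHom.ofLinearMap f hone hmul) hbij, fun x => hpF _ _⟩

lemma exists_equivalent_deform (d : FirstOrderDeformation k A) :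
    ∃ m : Z2 k A, Equivalent k A (Bm.deform m) d := by
  haveI := d.flat
  have hx : ∀ (x : k) (b : d.B), d.iso (x ⊗ₜ[DualNumber k] b) =
      x • d.iso ((1 : k) ⊗ₜ[DualNumber k] b) := by
    intro x b
    rw [← map_smul, smul_tmul', smul_eq_mul, mul_one]
  let p : d.B →+* A :=
    { toFun := fun b => d.iso ((1 : k) ⊗ₜ[DualNumber k] b)
      map_one' := map_one d.iso
      map_mul' := fun a b => by
        rw [← map_mul, Algebra.TensorProduct.tmul_mul_tmul, one_mul]
      map_zero' := by rw [tmul_zero, map_zero]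
      map_add' := fun a b => by rw [tmul_add, map_add] }
  have hp : ∀ b, p b = d.iso ((1 : k) ⊗ₜ[DualNumber k] b) := fun _ => rfl
  obtain ⟨m, ψ, hψ⟩ := exists_cocycle p
    (fun c b => by
      rw [hp, hp, ← hx]
      exact congrArg d.iso (one_tmul_smul c b))
    (fun a => by
      obtain ⟨b, hb⟩ := exists_one_tmul (d.iso.symm a)
      exact ⟨b, by rw [hp, ← hb, AlgEquiv.apply_symm_apply]⟩)
    (fun b hb => exists_eps_of_tmul_eq_zero b (d.iso.injective (by rw [map_zero]; exact hb)))
    (fun b hb => exists_eps_of_eps_smul_eq_zero (k := k) b hb)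
  refine ⟨m, ψ, fun x b => ?_⟩
  refine Eq.trans ?_ (Bm.deform_iso m x b).symm
  exact (hx x (ψ b)).trans (congrArg (x • ·) (hψ b))

/-- Two surjections with the same fibers have equivalent targets. -/
lemma nonempty_equiv_of_surjective {X : Type*} {Y : Type*} {Z : Type*} (F : X → Y) (G : X → Z)
    (hF : Function.Surjective F) (hG : Function.Surjective G)
    (h : ∀ x x', F x = F x' ↔ G x = G x') : Nonempty (Y ≃ Z) :=
  ⟨{ toFun := fun y => G (Function.surjInv hF y)
     invFun := fun z => F (Function.surjInv hG z)
     left_inv := fun y => by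
       conv_rhs => rw [← Function.surjInv_eq hF y]
       rw [h, Function.surjInv_eq hG]
     right_inv := fun z => by
       conv_rhs => rw [← Function.surjInv_eq hG z]
       rw [← h, Function.surjInv_eq hF] }⟩

end Final

/-- Let `k` be a field and `A` an associative unital `k`-algebra. The set of equivalence
classes of first-order deformations of `A` over the dual numbers `k[ε]` is in (canonical)
bijection with the second Hochschild cohomology group
`HH²(A) = Ext²_{A ⊗[k] Aᵐᵒᵖ}(A, A)`, the Ext group being computed in the abelian
category of left `A ⊗[k] Aᵐᵒᵖ`-modules. -/
theorem firstOrderDeformations_equiv_hochschild :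
    Nonempty
      (Quot (Equivalent k A) ≃
        ((Ext ℤ (ModuleCat.{0} (A ⊗[k] Aᵐᵒᵖ)) 2).obj
            (Opposite.op (ModuleCat.of (A ⊗[k] Aᵐᵒᵖ) A))).obj
          (ModuleCat.of (A ⊗[k] Aᵐᵒᵖ) A)) := by
  obtain ⟨F, hF, hFF⟩ := ext2_cocycles k A
  refine nonempty_equiv_of_surjective (fun m : Z2 k A => Quot.mk (Equivalent k A) (Bm.deform m)) F
    ?_ hF ?_
  · intro q
    obtain ⟨d, rfl⟩ := Quot.exists_rep q
    obtain ⟨m, hm⟩ := exists_equivalent_deform d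
    exact ⟨m, (quot_eq_iff _ _).2 hm⟩
  · intro m n
    rw [hFF, ← deform_equivalent_iff]
    exact quot_eq_iff _ _

end AlgebraDeformation
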